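/- There exist trees requiring Ω(√n) colours to be subset square coloured: for every integer d ≥ 2 there exists a tree T on n = d² + d + 1 vertices with χ_ssc(T) ≥ d, and hence with χ_ssc(T) ≥ √n − 1. -/

import Mathlib

open SimpleGraph

/-- The closed neighbourhood of `v` in `G`. -/
def closedNbhd {V : Type*} (G : SimpleGraph V) (v : V) : Set V :=
  {u | u = v ∨ G.Adj v u}

/-- `c` is a `q`-subset square colouring of `G`: colours `1, …, q` are real colours and
colour `0` means "uncoloured"; every closed neighbourhood contains a coloured vertex, and
no nonzero colour appears on two distinct vertices of a closed neighbourhood. -/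
def IsSubsetSquareColouring {V : Type*} (G : SimpleGraph V) (q : ℕ) (c : V → ℕ) : Prop :=
  (∀ v, c v ≤ q) ∧
  (∀ v, ∃ u ∈ closedNbhd G v, c u ≠ 0) ∧
  (∀ v i, 1 ≤ i → i ≤ q →
    ∀ u ∈ closedNbhd G v, ∀ w ∈ closedNbhd G v, c u = i → c w = i → u = w)

/-- The subset square chromatic number `χ_ssc G`. -/
noncomputable def sscNum {V : Type*} (G : SimpleGraph V) : ℕ :=
  sInf {q | ∃ c : V → ℕ, IsSubsetSquareColouring G q c}

/-- parent map of the tree -/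
def par8 {d : ℕ} : Option (Fin d × Option (Fin d)) → Option (Fin d × Option (Fin d))
  | none => none
  | some (_, none) => none
  | some (i, some _) => some (i, none)

/-- the tree -/
def tree8 (d : ℕ) : SimpleGraph (Option (Fin d × Option (Fin d))) where
  Adj u v := u ≠ v ∧ (par8 u = v ∨ par8 v = u)
  symm := ⟨fun _ _ h => ⟨h.1.symm, h.2.symm⟩⟩
  loopless := ⟨fun _ h => h.1 rfl⟩

theorem tree8_adj1 {d : ℕ} (i : Fin d) : (tree8 d).Adj none (some (i, none)) :=
  ⟨by simp, Or.inr rfl⟩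

theorem tree8_adj2 {d : ℕ} (i j : Fin d) :
    (tree8 d).Adj (some (i, none)) (some (i, some j)) :=
  ⟨by simp, Or.inr rfl⟩

theorem tree8_conn (d : ℕ) : (tree8 d).Connected := by
  have h : ∀ v, (tree8 d).Reachable none v := by
    rintro (_ | ⟨i, _ | j⟩)
    · exact Reachable.refl _
    · exact (tree8_adj1 i).reachable
    · exact (tree8_adj1 i).reachable.trans (tree8_adj2 i j).reachable
  exact ⟨fun u v => (h u).symm.trans (h v)⟩

theorem tree8_card (d : ℕ) : Fintype.card (Option (Fin d × Option (Fin d))) = d ^ 2 + d + 1 := by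
  simp; ring

theorem tree8_acyc (d : ℕ) : (tree8 d).IsAcyclic := by
  refine (isTree_iff_connected_and_card.2 ⟨tree8_conn d, ?_⟩).IsAcyclic
  refine le_antisymm ?_ (tree8_conn d).card_vert_le_card_edgeSet_add_one
  have hsub : (tree8 d).edgeSet ⊆
      Set.range (fun x : Fin d × Option (Fin d) => s(some x, par8 (some x))) := by
    intro e
    induction e with
    | _ u v =>
      rintro ⟨hne, h⟩
      rcases h with h | h
      · rcases u with _ | x
        · exact absurd h hne
        · exact ⟨x, by simp [h]⟩
      · rcases v with _ | x
        · exact absurd h.symm hne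
        · exact ⟨x, by simp [h, Sym2.eq_swap]⟩
  have h1 := Nat.card_mono (Set.finite_range _) hsub
  have h2 := Finite.card_range_le
    (fun x : Fin d × Option (Fin d) => s(some x, par8 (some x)))
  have h3 : Nat.card (Option (Fin d × Option (Fin d))) =
    Nat.card (Fin d × Option (Fin d)) + 1 := Finite.card_option
  omega

theorem tree8_le {d q : ℕ} {V : Type} {G : SimpleGraph V} {c : V → ℕ}
    (hc : IsSubsetSquareColouring G q c) (v : V) (f : Fin d → V) (hf : Function.Injective f)
    (hv : ∀ i, G.Adj v (f i)) (h0 : ∀ i, c (f i) ≠ 0) : d ≤ q := by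
  have : ((Finset.univ : Finset (Fin d)).image (fun i => c (f i))) ⊆ Finset.Icc 1 q := by
    intro x hx
    obtain ⟨i, -, rfl⟩ := Finset.mem_image.1 hx
    exact Finset.mem_Icc.2 ⟨Nat.pos_of_ne_zero (h0 i), hc.1 _⟩
  have h := Finset.card_le_card this
  rw [Finset.card_image_of_injective] at h
  · simpa using h
  · intro i j hij
    exact hf (hc.2.2 v _ (Nat.pos_of_ne_zero (h0 i)) (hc.1 _) _ (Or.inr (hv i)) _
      (Or.inr (hv j)) rfl hij.symm)

theorem tree8_ssc (d : ℕ) : d ≤ sscNum (tree8 d) := by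
  unfold sscNum
  apply le_csInf
  · refine ⟨Fintype.card (Option (Fin d × Option (Fin d))),
      fun v => (Fintype.equivFin _ v).val + 1, fun v => ?_, fun v => ⟨v, Or.inl rfl, by simp⟩, ?_⟩
    · exact (Fintype.equivFin _ v).isLt
    · intro v i _ _ u _ w _ hu hw
      apply (Fintype.equivFin _).injective
      apply Fin.ext
      have := hu.trans hw.symm
      simpa using this
  · rintro q ⟨c, hc⟩
    by_cases h : ∀ i : Fin d, c (some (i, none)) ≠ 0
    · exact tree8_le hc none (fun i => some (i, none)) (fun i j h => by simpa using h)
        tree8_adj1 h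
    · push Not at h
      obtain ⟨i, hi⟩ := h
      refine tree8_le hc (some (i, none)) (fun j => some (i, some j))
        (fun i j h => by simpa using h) (tree8_adj2 i) ?_
      intro j
      obtain ⟨u, hu, hcu⟩ := hc.2.1 (some (i, some j))
      rcases hu with rfl | ⟨-, hu | hu⟩
      · exact hcu
      · exact absurd (hu ▸ hi) hcu
      · rcases u with _ | ⟨k, _ | l⟩ <;> simp [par8] at hu

theorem stmt8 (d : ℕ) (hd : 2 ≤ d) :
    ∃ (V : Type) (_ : Fintype V) (T : SimpleGraph V),
      T.Connected ∧ T.IsAcyclic ∧ Fintype.card V = d ^ 2 + d + 1 ∧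
      d ≤ sscNum T ∧
      Real.sqrt (Fintype.card V) - 1 ≤ (sscNum T : ℝ) := by
  refine ⟨_, inferInstance, tree8 d, tree8_conn d, tree8_acyc d, tree8_card d, tree8_ssc d, ?_⟩
  have h : (d : ℝ) ≤ sscNum (tree8 d) := by exact_mod_cast tree8_ssc d
  rw [tree8_card d]
  have : Real.sqrt ((d ^ 2 + d + 1 : ℕ) : ℝ) ≤ d + 1 := by
    rw [Real.sqrt_le_left (by positivity)]
    push_cast
    nlinarith [(Nat.cast_nonneg d : (0 : ℝ) ≤ d)]
  linarith
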